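/- Let R be a commutative ring, k ≥ 2, and let a, b, c, x_0, …, x_k ∈ R. Set f = Σ_{i=0}^{k} C(k,i)·x_i·u^{k−i}·v^i in the polynomial ring R[u,v]. Then a·(∂²f/∂u²) + b·(∂²f/∂u∂v) + c·(∂²f/∂v²) = k·(k−1)·Σ_{i=0}^{k−2} C(k−2,i)·(a·x_i + b·x_{i+1} + c·x_{i+2})·u^{k−2−i}·v^i, where C(n,j) denotes the binomial coefficient. In particular, the vanishing of the recurrence relations a·x_i + b·x_{i+1} + c·x_{i+2} for all 0 ≤ i ≤ k−2 is equivalent to the apolarity of the quadratic form q = a·ǔ² + 2b·ǔv̌ + c·v̌² and the binary form f. -/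

import Mathlib

/-!
With binomially normalised coefficients, differentiation of a binary form acts on the coefficient
sequence in the simplest possible way: if `F n x = Σ C(n,i) x_i u^{n-i} v^i`, then
`∂F(n+1, x)/∂u = (n+1) F(n, x)` and `∂F(n+1, x)/∂v = (n+1) F(n, shift x)`. Both follow from the
absorption identities for binomial coefficients (`pderiv_zero_binaryForm`,
`pderiv_one_binaryForm`). Applying them twice turns `f_uu`, `f_uv`, `f_vv` into `k(k-1)` times the
forms of degree `k-2` attached to `x` shifted by `0`, `1`, `2`, and `F` is linear in `x`.
For `k ≤ 1` both sides vanish.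
-/

open MvPolynomial Finset

/-- The binary form `Σ C(n,i) x_i u^{n-i} v^i` with `u = X 0`, `v = X 1`. Only the terms
`x 0, …, x n` of the sequence matter. -/
noncomputable def binaryForm {R : Type*} [CommRing R] (n : ℕ) (x : ℕ → R) :
    MvPolynomial (Fin 2) R :=
  ∑ i ∈ range (n + 1),
    (Nat.choose n i : MvPolynomial (Fin 2) R) * C (x i) * X 0 ^ (n - i) * X 1 ^ i

lemma pderiv_binaryForm_zero {R : Type*} [CommRing R] (j : Fin 2) (x : ℕ → R) :
    pderiv j (binaryForm 0 x) = 0 := by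
  simp [binaryForm]

lemma pderiv_zero_binaryForm {R : Type*} [CommRing R] (n : ℕ) (x : ℕ → R) :
    pderiv 0 (binaryForm (n + 1) x) = ((n + 1 : ℕ) : MvPolynomial (Fin 2) R) * binaryForm n x := by
  unfold binaryForm
  -- The top term `v^(n+1)` is killed by `∂/∂u`.
  rw [sum_range_succ, map_add, map_sum, mul_sum]
  have htop : pderiv 0 (((n + 1).choose (n + 1) : MvPolynomial (Fin 2) R) * C (x (n + 1)) *
      X 0 ^ (n + 1 - (n + 1)) * X 1 ^ (n + 1)) = 0 := by
    simp [pderiv_X]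
  rw [htop, add_zero]
  refine sum_congr rfl fun i hi => ?_
  have hin : i ≤ n := Nat.lt_succ_iff.mp (mem_range.mp hi)
  have hsub : n + 1 - i = n - i + 1 := by omega
  have habs : ((n + 1).choose i : MvPolynomial (Fin 2) R) * ((n - i : ℕ) + 1) =
      ((n : MvPolynomial (Fin 2) R) + 1) * (n.choose i) := by
    have h := Nat.choose_mul_succ_eq n i
    rw [hsub] at h
    have h' := congrArg (Nat.cast : ℕ → MvPolynomial (Fin 2) R) h
    push_cast at h'
    rw [← h', mul_comm]
  simp only [hsub, pderiv_mul, pderiv_pow, pderiv_C, pderiv_X, Derivation.map_natCast]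
  simp
  linear_combination C (x i) * X 0 ^ (n - i) * X 1 ^ i * habs

lemma pderiv_one_binaryForm {R : Type*} [CommRing R] (n : ℕ) (x : ℕ → R) :
    pderiv 1 (binaryForm (n + 1) x) =
      ((n + 1 : ℕ) : MvPolynomial (Fin 2) R) * binaryForm n (fun i => x (i + 1)) := by
  unfold binaryForm
  -- The bottom term `u^(n+1)` is killed by `∂/∂v`.
  rw [sum_range_succ', map_add, map_sum, mul_sum]
  have hbot : pderiv 1 (((n + 1).choose 0 : MvPolynomial (Fin 2) R) * C (x 0) *
      X 0 ^ (n + 1 - 0) * X 1 ^ 0) = 0 := by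
    simp [pderiv_X]
  rw [hbot, add_zero]
  refine sum_congr rfl fun i _ => ?_
  have habs : ((n + 1).choose (i + 1) : MvPolynomial (Fin 2) R) * ((i : ℕ) + 1) =
      ((n : MvPolynomial (Fin 2) R) + 1) * (n.choose i) := by
    have h' := congrArg (Nat.cast : ℕ → MvPolynomial (Fin 2) R) (Nat.add_one_mul_choose_eq n i)
    push_cast at h'
    exact h'.symm
  simp only [Nat.add_sub_add_right, pderiv_mul, pderiv_pow, pderiv_C, pderiv_X,
    Derivation.map_natCast]
  simp
  linear_combination C (x (i + 1)) * X 0 ^ (n - i) * X 1 ^ i * habs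

lemma binaryForm_linear_combination {R : Type*} [CommRing R] (n : ℕ) (a b c : R)
    (x y z : ℕ → R) :
    binaryForm n (fun i => a * x i + b * y i + c * z i) =
      C a * binaryForm n x + C b * binaryForm n y + C c * binaryForm n z := by
  simp only [binaryForm, mul_sum, ← sum_add_distrib]
  refine sum_congr rfl fun i _ => ?_
  simp only [C_add, C_mul]
  ring

/-- Applying the quadratic form `q = a ǔ² + 2b ǔ v̌ + c v̌²` to the second polar
of the binary form `f = Σ C(k,i) x_i u^{k-i} v^i`: in `R[u,v]` (with `u = X 0`,
`v = X 1`) one has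
`a f_uu + b f_uv + c f_vv
  = k(k-1) Σ_{i=0}^{k-2} C(k-2,i) (a x_i + b x_{i+1} + c x_{i+2}) u^{k-2-i} v^i`,
so that the vanishing of the recurrence relations `a x_i + b x_{i+1} + c x_{i+2}`
expresses the apolarity of `q` and `f`. -/
theorem apolarity_second_polar {R : Type*} [CommRing R] (k : ℕ)
    (a b c : R) (x : ℕ → R) :
    (C a) * (pderiv 0 (pderiv 0 (∑ i ∈ range (k + 1),
          (Nat.choose k i : MvPolynomial (Fin 2) R) * C (x i) * X 0 ^ (k - i) * X 1 ^ i)))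
      + (C b) * (pderiv 0 (pderiv 1 (∑ i ∈ range (k + 1),
          (Nat.choose k i : MvPolynomial (Fin 2) R) * C (x i) * X 0 ^ (k - i) * X 1 ^ i)))
      + (C c) * (pderiv 1 (pderiv 1 (∑ i ∈ range (k + 1),
          (Nat.choose k i : MvPolynomial (Fin 2) R) * C (x i) * X 0 ^ (k - i) * X 1 ^ i)))
    = (k : MvPolynomial (Fin 2) R) * ((k : MvPolynomial (Fin 2) R) - 1) *
        ∑ i ∈ range (k - 1),
          (Nat.choose (k - 2) i : MvPolynomial (Fin 2) R) *
            C (a * x i + b * x (i + 1) + c * x (i + 2)) * X 0 ^ (k - 2 - i) * X 1 ^ i := by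
  change C a * pderiv 0 (pderiv 0 (binaryForm k x)) + C b * pderiv 0 (pderiv 1 (binaryForm k x)) +
    C c * pderiv 1 (pderiv 1 (binaryForm k x)) = _
  match k with
  | 0 => simp [pderiv_binaryForm_zero]
  | 1 =>
    simp [pderiv_zero_binaryForm 0, pderiv_one_binaryForm 0, pderiv_binaryForm_zero]
  | n + 2 =>
    change _ = _ * binaryForm n (fun i => a * x i + b * x (i + 1) + c * x (i + 2))
    rw [binaryForm_linear_combination n a b c x (fun i => x (i + 1)) (fun i => x (i + 2))]
    simp only [pderiv_zero_binaryForm, pderiv_one_binaryForm, pderiv_mul, Derivation.map_natCast,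
      zero_mul, zero_add]
    push_cast
    ring
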